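/- arXiv:2201.05465 — 2 statements merged into one kernel-verified Lean document; each statement's English description precedes it below -/
import Mathlib

section
/- Let S ⊆ V, let v ∈ S and let v' ∈ V∖S. If contribution(v', S∖{v}) ≥ contribution(v, S∖{v}), then val((S∖{v}) ∪ {v'}) ≥ val(S); symmetrically, if contribution(v', S∖{v}) ≤ contribution(v, S∖{v}), then val((S∖{v}) ∪ {v'}) ≤ val(S). -/
open Finset

variable {V : Type*} [Fintype V] [DecidableEq V]

/-- Number of edges of `G` with both endpoints in `S`. -/
def mIn (G : SimpleGraph V) [DecidableRel G.Adj] (S : Finset V) : ℕ :=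
  (G.edgeFinset.filter (fun e => ∀ v ∈ e, v ∈ S)).card

/-- Number of edges of `G` with exactly one endpoint in `S`. -/
def mCut (G : SimpleGraph V) [DecidableRel G.Adj] (S : Finset V) : ℕ :=
  (G.edgeFinset.filter (fun e => (∃ v ∈ e, v ∈ S) ∧ ∃ v ∈ e, v ∉ S)).card

/-- `val(S) = α·(m(S, V∖S) + counter(S)) + (1−α)·m(S)`. -/
noncomputable def val (G : SimpleGraph V) [DecidableRel G.Adj] (counter : V → ℕ) (α : ℝ)
    (S : Finset V) : ℝ :=
  α * ((mCut G S : ℝ) + ∑ v ∈ S, (counter v : ℝ)) + (1 - α) * (mIn G S : ℝ)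

/-- `degc(v) = deg(v) + counter(v)`. -/
def degc (G : SimpleGraph V) [DecidableRel G.Adj] (counter : V → ℕ) (v : V) : ℕ :=
  G.degree v + counter v

/-- `contribution(v, T) = α·degc(v) + (1−3α)·|N(v) ∩ T|`. -/
noncomputable def contribution (G : SimpleGraph V) [DecidableRel G.Adj] (counter : V → ℕ)
    (α : ℝ) (v : V) (T : Finset V) : ℝ :=
  α * (degc G counter v : ℝ) + (1 - 3 * α) * ((G.neighborFinset v ∩ T).card : ℝ)

/-!
Every edge with both endpoints in `S` is counted twice, and every edge leaving `S` once, in the sum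
of the degrees over `S`. Hence `m(S, V∖S) = ∑ u ∈ S, deg(u) - 2·m(S)`, and
`val(S) = α·∑ u ∈ S, degc(u) + (1−3α)·m(S)`. As adding `v ∉ T` to `T` creates `|N(v) ∩ T|` internal
edges, `contribution(v, T)` is exactly the increment of `val`. Both `S` and `(S∖{v}) ∪ {v'}` arise
by adding one vertex to `S∖{v}`, so the difference of their values is that of the contributions.
-/

theorem card_filter_mem_of_not_isDiag {β : Type*} [DecidableEq β] (S : Finset β) {e : Sym2 β}
    [Decidable (∀ u ∈ e, u ∈ S)] [Decidable ((∃ u ∈ e, u ∈ S) ∧ ∃ u ∈ e, u ∉ S)]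
    (he : ¬e.IsDiag) :
    #{u ∈ S | u ∈ e} =
      2 * (if ∀ u ∈ e, u ∈ S then 1 else 0) +
        (if (∃ u ∈ e, u ∈ S) ∧ ∃ u ∈ e, u ∉ S then 1 else 0) := by
  obtain ⟨a, b, rfl⟩ : ∃ a b, e = s(a, b) := Sym2.exists.mp ⟨e, rfl⟩
  have hab : a ≠ b := mt Sym2.mk_isDiag_iff.mpr he
  have filter_eq : {u ∈ S | u ∈ s(a, b)} = {u ∈ ({a, b} : Finset β) | u ∈ S} := by
    ext u
    simp [and_comm]
  rw [filter_eq]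
  by_cases ha : a ∈ S <;> by_cases hb : b ∈ S <;>
    simp [filter_insert, filter_singleton, ha, hb, hab]

theorem sum_degree_eq_two_mul_mIn_add_mCut (G : SimpleGraph V) [DecidableRel G.Adj]
    (S : Finset V) :
    ∑ u ∈ S, G.degree u = 2 * mIn G S + mCut G S :=
  calc ∑ u ∈ S, G.degree u = ∑ u ∈ S, #{e ∈ G.edgeFinset | u ∈ e} := by
        simp only [← G.card_incidenceFinset_eq_degree, G.incidenceFinset_eq_filter]
    _ = ∑ e ∈ G.edgeFinset, #{u ∈ S | u ∈ e} :=
        sum_card_bipartiteAbove_eq_sum_card_bipartiteBelow (fun u e ↦ u ∈ e)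
    _ = ∑ e ∈ G.edgeFinset, (2 * (if ∀ u ∈ e, u ∈ S then 1 else 0) +
          (if (∃ u ∈ e, u ∈ S) ∧ ∃ u ∈ e, u ∉ S then 1 else 0)) :=
        sum_congr rfl fun _ he ↦
          card_filter_mem_of_not_isDiag S (G.not_isDiag_of_mem_edgeFinset he)
    _ = 2 * mIn G S + mCut G S := by
        simp only [mIn, mCut, card_filter, sum_add_distrib, mul_sum]

theorem filter_edgeFinset_insert (G : SimpleGraph V) [DecidableRel G.Adj] (T : Finset V) (v : V) :
    {e ∈ G.edgeFinset | ∀ u ∈ e, u ∈ insert v T} =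
      {e ∈ G.edgeFinset | ∀ u ∈ e, u ∈ T} ∪
        (G.neighborFinset v ∩ T).image (fun w ↦ s(v, w)) := by
  have filter_eq (S : Finset V) :
      {e ∈ G.edgeFinset | ∀ u ∈ e, u ∈ S} = {e ∈ S.sym2 | e ∈ G.edgeSet} := by
    ext e
    simp only [mem_filter, mem_sym2_iff, SimpleGraph.mem_edgeFinset, and_comm]
  have neighbors_eq : {w ∈ insert v T | s(v, w) ∈ G.edgeSet} = G.neighborFinset v ∩ T := by
    ext w
    simp [filter_insert, and_comm]
  rw [filter_eq, filter_eq, sym2_insert, filter_union, filter_image, neighbors_eq, union_comm]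

theorem mIn_insert (G : SimpleGraph V) [DecidableRel G.Adj] {T : Finset V} {v : V}
    (hv : v ∉ T) :
    mIn G (insert v T) = mIn G T + #(G.neighborFinset v ∩ T) := by
  have new_edges_disjoint : Disjoint {e ∈ G.edgeFinset | ∀ u ∈ e, u ∈ T}
      ((G.neighborFinset v ∩ T).image (fun w ↦ s(v, w))) := by
    simp only [disjoint_right, mem_image, mem_filter]
    rintro _ ⟨w, -, rfl⟩ ⟨-, endpoints_mem⟩
    exact hv (endpoints_mem v (Sym2.mem_mk_left v w))
  rw [mIn, filter_edgeFinset_insert, card_union_of_disjoint new_edges_disjoint,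
    card_image_of_injective _ fun _ _ ↦ Sym2.congr_right.mp, mIn]

theorem val_eq_sum_degc_add_mIn (G : SimpleGraph V) [DecidableRel G.Adj] (counter : V → ℕ)
    (α : ℝ) (S : Finset V) :
    val G counter α S =
      α * ∑ u ∈ S, (degc G counter u : ℝ) + (1 - 3 * α) * (mIn G S : ℝ) := by
  have degree_sum : ∑ u ∈ S, (G.degree u : ℝ) = 2 * mIn G S + mCut G S := by
    exact_mod_cast sum_degree_eq_two_mul_mIn_add_mCut G S
  simp only [_root_.val, degc, Nat.cast_add, sum_add_distrib, degree_sum]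
  ring

theorem val_insert (G : SimpleGraph V) [DecidableRel G.Adj] (counter : V → ℕ) (α : ℝ)
    {T : Finset V} {v : V} (hv : v ∉ T) :
    val G counter α (insert v T) = val G counter α T + contribution G counter α v T := by
  simp only [val_eq_sum_degc_add_mIn, contribution, sum_insert hv, mIn_insert G hv, Nat.cast_add]
  ring

theorem val_insert_erase_sub_val (G : SimpleGraph V) [DecidableRel G.Adj] (counter : V → ℕ)
    (α : ℝ) {S : Finset V} {v v' : V} (hv : v ∈ S) (hv' : v' ∉ S.erase v) :
    val G counter α (insert v' (S.erase v)) - val G counter α S =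
      contribution G counter α v' (S.erase v) - contribution G counter α v (S.erase v) := by
  have val_eq := val_insert G counter α (notMem_erase v S)
  rw [insert_erase hv] at val_eq
  rw [val_insert G counter α hv', val_eq, add_sub_add_left_eq_sub]

/-- Exchange argument: replacing `v ∈ S` by a vertex `v' ∉ S` whose contribution
with respect to `S∖{v}` is at least (resp. at most) that of `v` does not decrease
(resp. increase) `val`. -/
theorem val_exchange (G : SimpleGraph V) [DecidableRel G.Adj]
    (counter : V → ℕ) (α : ℝ) (S : Finset V) (v : V) (hv : v ∈ S)
    (v' : V) (hv' : v' ∉ S) :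
    (contribution G counter α v' (S.erase v) ≥ contribution G counter α v (S.erase v) →
      val G counter α (insert v' (S.erase v)) ≥ val G counter α S) ∧
    (contribution G counter α v' (S.erase v) ≤ contribution G counter α v (S.erase v) →
      val G counter α (insert v' (S.erase v)) ≤ val G counter α S) := by
  have val_sub := val_insert_erase_sub_val G counter α hv (mt mem_of_mem_erase hv')
  constructor <;> intro h <;> linarith
end

section
/- Suppose 1/3 < α ≤ 1. For every T ⊆ V and every finite set F ⊆ V∖T with |F| = r, there is an enumeration v_1, …, v_r of F such that, writing S_i = T ∪ {v_1, …, v_{i−1}}, the sequence contribution(v_1, S_1) ≥ contribution(v_2, S_2) ≥ … ≥ contribution(v_r, S_r) is non-increasing. If instead 0 ≤ α < 1/3, there is an enumeration of F for which this sequence is non-decreasing. -/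
open Finset

variable {V : Type*} [Fintype V] [DecidableEq V]

/-!
Choose the enumeration greedily: `v₁` maximises `contribution(·, T)` over `F`, and the rest
enumerates `F \ {v₁}` in the same way, starting from `T ∪ {v₁}`. When `α ≥ 1/3` the coefficient
`1 - 3α` is nonpositive, so enlarging the set can only lower a contribution; hence every later
contribution is at most `contribution(v_j, T)`, which is at most `contribution(v₁, T)` by the
choice of `v₁`. For `α ≤ 1/3` the same argument applies with the order of `ℝ` reversed.
-/

section GreedyEnumeration

variable {W β : Type*} [DecidableEq W] {n : ℕ}

/-- The set `S_i = T ∪ {v_1, …, v_{i-1}}` that is present when `v_i` is added; here the entries of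
`v` are indexed from `0`, so that `unionPrefix T v 0 = T`. -/
def unionPrefix (T : Finset W) (v : Fin n → W) (i : Fin n) : Finset W :=
  T ∪ (univ.filter fun l => l < i).image v

theorem subset_unionPrefix (T : Finset W) (v : Fin n → W) (i : Fin n) : T ⊆ unionPrefix T v i :=
  subset_union_left

theorem unionPrefix_cons_zero (T : Finset W) (x : W) (w : Fin n → W) :
    unionPrefix T (Fin.cons x w : Fin (n + 1) → W) 0 = T := by
  simp [unionPrefix]

theorem unionPrefix_cons_succ (T : Finset W) (x : W) (w : Fin n → W) (i : Fin n) :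
    unionPrefix T (Fin.cons x w : Fin (n + 1) → W) i.succ = unionPrefix (insert x T) w i := by
  ext y
  simp [unionPrefix, Fin.exists_fin_succ, eq_comm, or_left_comm]

theorem image_univ_cons (x : W) (w : Fin n → W) :
    univ.image (Fin.cons x w : Fin (n + 1) → W) = insert x (univ.image w) := by
  ext y
  simp [Fin.exists_fin_succ, eq_comm]

theorem antitone_cons_iff [Preorder β] {b : β} {g : Fin n → β} :
    Antitone (Fin.cons b g : Fin (n + 1) → β) ↔ (∀ i, g i ≤ b) ∧ Antitone g := by
  simp only [antitone_iff_forall_lt]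
  exact Fin.liftFun_cons (· ≥ ·)

theorem injective_of_image_univ_eq {v : Fin n → W} {F : Finset W} (hv : univ.image v = F)
    (hF : #F = n) : Function.Injective v := by
  rw [← Set.injOn_univ, ← coe_univ]
  exact injOn_of_card_image_eq (by rw [hv, hF, card_fin])

theorem antitone_unionPrefix_cons [Preorder β] {f : W → Finset W → β} (hf : ∀ x, Antitone (f x))
    {T : Finset W} {x : W} {w : Fin n → W} (hx : ∀ i, f (w i) T ≤ f x T)
    (hw : Antitone fun i => f (w i) (unionPrefix (insert x T) w i)) :
    Antitone fun i => f ((Fin.cons x w : Fin (n + 1) → W) i) (unionPrefix T (Fin.cons x w) i) := by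
  have values_eq_cons :
      (fun i => f ((Fin.cons x w : Fin (n + 1) → W) i) (unionPrefix T (Fin.cons x w) i)) =
        Fin.cons (f x T) fun i => f (w i) (unionPrefix (insert x T) w i) := by
    funext i
    cases i using Fin.cases <;> simp [unionPrefix_cons_zero, unionPrefix_cons_succ]
  rw [values_eq_cons, antitone_cons_iff]
  refine ⟨fun i => ?_, hw⟩
  have subset_stage : T ⊆ unionPrefix (insert x T) w i :=
    (subset_insert x T).trans (subset_unionPrefix _ w i)
  exact (hf (w i) subset_stage).trans (hx i)

theorem exists_enumeration_antitone [LinearOrder β] {f : W → Finset W → β}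
    (hf : ∀ x, Antitone (f x)) (T F : Finset W) (hF : #F = n) :
    ∃ v : Fin n → W, Function.Injective v ∧ univ.image v = F ∧
      Antitone fun i => f (v i) (unionPrefix T v i) := by
  suffices ∃ v : Fin n → W, univ.image v = F ∧ Antitone fun i => f (v i) (unionPrefix T v i) by
    obtain ⟨v, hv, hanti⟩ := this
    exact ⟨v, injective_of_image_univ_eq hv hF, hv, hanti⟩
  induction n generalizing T F with
  | zero => exact ⟨Fin.elim0, by simp [card_eq_zero.mp hF], fun i => i.elim0⟩
  | succ n ih =>
    obtain ⟨x, hxF, hmax⟩ := exists_max_image F (f · T) (card_pos.mp (by lia))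
    have card_rest : #(F.erase x) = n := by rw [card_erase_of_mem hxF, hF, Nat.add_sub_cancel]
    obtain ⟨w, hw, hanti⟩ := ih (insert x T) (F.erase x) card_rest
    have hwF (i : Fin n) : w i ∈ F := mem_of_mem_erase (hw ▸ mem_image_of_mem w (mem_univ i))
    exact ⟨Fin.cons x w, by rw [image_univ_cons, hw, insert_erase hxF],
      antitone_unionPrefix_cons hf (fun i => hmax (w i) (hwF i)) hanti⟩

theorem exists_enumeration_monotone [LinearOrder β] {f : W → Finset W → β}
    (hf : ∀ x, Monotone (f x)) (T F : Finset W) (hF : #F = n) :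
    ∃ v : Fin n → W, Function.Injective v ∧ univ.image v = F ∧
      Monotone fun i => f (v i) (unionPrefix T v i) :=
  exists_enumeration_antitone (β := βᵒᵈ) hf T F hF

end GreedyEnumeration

section Contribution

variable (G : SimpleGraph V) [DecidableRel G.Adj] (counter : V → ℕ) {α : ℝ}

theorem monotone_card_neighborFinset_inter (v : V) :
    Monotone fun T : Finset V => (#(G.neighborFinset v ∩ T) : ℝ) :=
  fun _ _ h => Nat.cast_le.mpr (card_le_card (inter_subset_inter_left h))

theorem contribution_antitone (hα : 1 / 3 ≤ α) (v : V) : Antitone (contribution G counter α v) :=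
  ((monotone_card_neighborFinset_inter G v).const_mul_of_nonpos (by linarith)).const_add _

theorem contribution_monotone (hα : α ≤ 1 / 3) (v : V) : Monotone (contribution G counter α v) :=
  ((monotone_card_neighborFinset_inter G v).const_mul (by linarith)).const_add _

theorem exists_monotone_enumeration_general (T F : Finset V) (r : ℕ) (hF : #F = r) :
    (1 / 3 ≤ α →
      ∃ v : Fin r → V, Function.Injective v ∧ univ.image v = F ∧
        Antitone fun i => contribution G counter α (v i) (unionPrefix T v i)) ∧
    (α ≤ 1 / 3 →
      ∃ v : Fin r → V, Function.Injective v ∧ univ.image v = F ∧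
        Monotone fun i => contribution G counter α (v i) (unionPrefix T v i)) :=
  ⟨fun hα => exists_enumeration_antitone (contribution_antitone G counter hα) T F hF,
    fun hα => exists_enumeration_monotone (contribution_monotone G counter hα) T F hF⟩

end Contribution

/-- Greedy ordering: for `1/3 < α ≤ 1` every finite `F ⊆ V∖T` admits an enumeration
along which the contributions (w.r.t. the growing prefix added to `T`) are
non-increasing; for `0 ≤ α < 1/3` an enumeration along which they are non-decreasing. -/
theorem exists_monotone_enumeration (G : SimpleGraph V) [DecidableRel G.Adj]
    (counter : V → ℕ) (α : ℝ) (T F : Finset V) (hTF : Disjoint F T)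
    (r : ℕ) (hF : F.card = r) :
    (1 / 3 < α ∧ α ≤ 1 →
      ∃ v : Fin r → V, Function.Injective v ∧ Finset.image v Finset.univ = F ∧
        ∀ i j : Fin r, i ≤ j →
          contribution G counter α (v j)
              (T ∪ Finset.image v (Finset.univ.filter (fun l => l < j))) ≤
            contribution G counter α (v i)
              (T ∪ Finset.image v (Finset.univ.filter (fun l => l < i)))) ∧
    (0 ≤ α ∧ α < 1 / 3 →
      ∃ v : Fin r → V, Function.Injective v ∧ Finset.image v Finset.univ = F ∧
        ∀ i j : Fin r, i ≤ j →
          contribution G counter α (v i)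
              (T ∪ Finset.image v (Finset.univ.filter (fun l => l < i))) ≤
            contribution G counter α (v j)
              (T ∪ Finset.image v (Finset.univ.filter (fun l => l < j)))) := by
  obtain ⟨antitone_case, monotone_case⟩ := exists_monotone_enumeration_general G counter T F r hF
  exact ⟨fun hα => antitone_case hα.1.le, fun hα => monotone_case hα.2.le⟩
end
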